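/- Let G and H be connected graphs and let R be a general position set of the Cartesian product G □ H. If u = (g,h) ∈ R, then the intersection of R with the H-layer through u is {u}, or the intersection of R with the G-layer through u is {u}; that is, {(g', h') ∈ R : g' = g} = {u} or {(g', h') ∈ R : h' = h} = {u}. -/

import Mathlib

open SimpleGraph

/-- A set `S` of vertices of `G` is a general position set if for every three
pairwise-distinct vertices `x, y, z ∈ S` one has `d(x,y) ≠ d(x,z) + d(z,y)`. -/
def IsGenPosSet {V : Type*} (G : SimpleGraph V) (S : Set V) : Prop :=
  ∀ x ∈ S, ∀ y ∈ S, ∀ z ∈ S, x ≠ y → x ≠ z → y ≠ z →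
    G.dist x y ≠ G.dist x z + G.dist z y

/-- The general position number of a graph on a finite vertex type: the
cardinality of a largest general position set. -/
noncomputable def genPosNum {V : Type*} [Fintype V] (G : SimpleGraph V) : ℕ :=
  sSup {n | ∃ S : Finset V, IsGenPosSet G ↑S ∧ S.card = n}

/-- A vertex is a leaf if it has exactly one neighbour (degree 1). -/
def IsLeaf {V : Type*} (G : SimpleGraph V) (v : V) : Prop :=
  ∃! w, G.Adj v w

/-- In a Cartesian product of connected graphs, the distance is the sum of the distances of the
coordinates. -/
theorem SimpleGraph.Connected.dist_boxProd {V W : Type*} {G : SimpleGraph V} {H : SimpleGraph W}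
    (hG : G.Connected) (hH : H.Connected) (x y : V × W) :
    (G □ H).dist x y = G.dist x.1 y.1 + H.dist x.2 y.2 := by
  rw [dist, edist_boxProd, ENat.toNat_add
    (edist_ne_top_iff_reachable.2 (hG.preconnected _ _))
    (edist_ne_top_iff_reachable.2 (hH.preconnected _ _))]
  rfl

/-- If `R` is a general position set of `G □ H` and `u = (g,h) ∈ R`, then the
intersection of `R` with the `H`-layer through `u` is `{u}`, or the
intersection of `R` with the `G`-layer through `u` is `{u}`. -/
theorem genPos_layer {V W : Type*}
    (G : SimpleGraph V) (H : SimpleGraph W)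
    (hG : G.Connected) (hH : H.Connected)
    (R : Set (V × W)) (hR : IsGenPosSet (G □ H) R)
    (g : V) (h : W) (hu : (g, h) ∈ R) :
    {p ∈ R | p.1 = g} = {(g, h)} ∨ {p ∈ R | p.2 = h} = {(g, h)} := by
  by_contra! hne
  obtain ⟨hgne, hhne⟩ := hne
  obtain ⟨⟨a, h'⟩, ⟨haR, hag⟩, ha⟩ : ∃ p ∈ {p ∈ R | p.1 = g}, p ≠ (g, h) := by
    by_contra! hall
    exact hgne (Set.eq_singleton_iff_unique_mem.2 ⟨⟨hu, rfl⟩, hall⟩)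
  obtain ⟨⟨g', b⟩, ⟨hbR, hbh⟩, hb⟩ : ∃ p ∈ {p ∈ R | p.2 = h}, p ≠ (g, h) := by
    by_contra! hall
    exact hhne (Set.eq_singleton_iff_unique_mem.2 ⟨⟨hu, rfl⟩, hall⟩)
  obtain rfl : a = g := hag
  obtain rfl : b = h := hbh
  refine hR _ haR _ hbR _ hu (fun heq => ha ?_) ha hb ?_
  · rw [Prod.mk.injEq] at heq
    rw [heq.2]
  · simp [hG.dist_boxProd hH, add_comm]
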